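/- Let 1 ≤ k ≤ L be integers, 0 < λ < 1, and let u be a solution of the mean-field ODE system taking values in Ū with initial condition g ∈ U satisfying either g_j ≤ ū_j for all j ≥ 0, or g_j ≥ ū_j for all j ≥ 0. Then for every j ≥ 0, ∫_0^∞ |u_j(t) − ū_j| dt < ∞. -/

import Mathlib

open Finset Set MeasureTheory

/-- The polynomial `f ≡ f^{(L,k)}` from the paper. -/
noncomputable def fLk (L k : ℕ) (x : ℝ) : ℝ :=
  ∑ i ∈ Finset.Icc 1 k,
    (L.choose (L - k + i) : ℝ) * ((L - k + i - 2).choose (i - 1) : ℝ) *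
      (-1 : ℝ) ^ (i - 1) * x ^ (L - k + i)

/-- Membership in `Ū`: real sequences with `1 = u_0 ≥ u_1 ≥ … ≥ 0`. -/
def InUbar (u : ℕ → ℝ) : Prop :=
  u 0 = 1 ∧ (∀ j, u (j + 1) ≤ u j) ∧ (∀ j, 0 ≤ u j)

/-- A `Ū`-valued solution of the mean-field ODE system with initial condition `g`. -/
def IsMFSol (L k : ℕ) (lam : ℝ) (g : ℕ → ℝ) (u : ℝ → ℕ → ℝ) : Prop :=
  (∀ j, u 0 j = g j) ∧
  (∀ t ∈ Set.Ici (0 : ℝ), InUbar (u t)) ∧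
  (∀ j, 1 ≤ j → ∀ t ∈ Set.Ici (0 : ℝ),
    HasDerivWithinAt (fun τ => u τ j)
      (lam * (fLk L k (u t (j - 1)) - fLk L k (u t j)) - k * (u t j - u t (j + 1)))
      (Set.Ici (0 : ℝ)) t)

/-!
The `ℓ¹` distance of two solutions `u`, `v` does not increase. Let `d = u - v` and
`F j = f (u j) - f (v j)`. The polynomial `f` is increasing on `[0, 1]`, so `F j` has the sign of
`d j`, and the right derivative of `|d (j + 1)|` is at most
`λ (|F j| - |F (j + 1)|) - k (|d (j + 1)| - |d (j + 2)|)`. Telescoping over `j`, integrating in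
time, and letting the boundary term at infinity vanish by dominated convergence gives
`k ∫ |d (j + 1)| ≤ ∑ |d i (0)| + λ ∫ |F j|`. As `f` is Lipschitz on `[0, 1]`, an induction on `j`
starting from `d 0 = 0` bounds every `∫ |d j|`; the theorem is the case where `v` is the constant
solution `ū`.

The facts about `f` come from `f'' (x) = c x ^ (L - k - 1) (1 - x) ^ (k - 1)` with `c ≥ 0` for
`k < L`: thus `f` is convex on `[0, 1]`, and `f' 0 = 0` makes it increasing there. Since
`f 1 = k`, a Vandermonde convolution, convexity also gives `f x ≤ k x`, so `ū m ≤ λ ^ m` is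
summable. For `k = L` the polynomial is `f x = k x`.
-/

theorem fLk_self (k : ℕ) (x : ℝ) : fLk k k x = k * x := by
  rcases k.eq_zero_or_pos with rfl | hk
  · simp [fLk]
  rw [fLk, Finset.sum_eq_single_of_mem 1 (Finset.mem_Icc.2 ⟨le_rfl, hk⟩)]
  · simp
  · intro i hi hi1
    have : (k - k + i - 2).choose (i - 1) = 0 :=
      Nat.choose_eq_zero_of_lt (by have := (Finset.mem_Icc.1 hi).1; omega)
    rw [this, Nat.cast_zero, mul_zero, zero_mul, zero_mul]

/-- The substitution `L = p + q + 2`, `k = q + 1` covers `1 ≤ k < L` without truncated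
subtractions. For `k = L` the term `i = 1` has `L - k + i - 2 = 0` by truncation. -/
theorem fLk_eq_sum_range (p q : ℕ) (x : ℝ) :
    fLk (p + q + 2) (q + 1) x = ∑ s ∈ Finset.range (q + 1),
      ((p + q + 2).choose (p + s + 2) * (p + s).choose s * (-1) ^ s) * x ^ (p + s + 2) := by
  rw [fLk, ← Finset.Ico_add_one_right_eq_Icc, Finset.sum_Ico_eq_sum_range]
  refine Finset.sum_congr rfl fun s _ => ?_
  rw [show p + q + 2 - (q + 1) + (1 + s) = p + s + 2 by omega, Nat.add_sub_cancel_left,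
    Nat.add_sub_cancel]

theorem sum_range_choose_mul_choose_mul_neg_one_pow (p q : ℕ) :
    ∑ s ∈ Finset.range (q + 1),
      ((p + q + 2).choose (p + s + 2) * (p + s).choose s * (-1) ^ s : ℤ) = q + 1 := by
  have vandermonde := Ring.add_choose_eq q (Commute.all (-(p + 1 : ℤ)) ((p + q + 2 : ℕ) : ℤ))
  rw [show -(p + 1 : ℤ) + ((p + q + 2 : ℕ) : ℤ) = ((q + 1 : ℕ) : ℤ) by push_cast; ring,
    Ring.choose_natCast, Nat.choose_succ_self_right,
    Finset.Nat.sum_antidiagonal_eq_sum_range_succ_mk] at vandermonde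
  push_cast at vandermonde
  rw [vandermonde]
  refine Finset.sum_congr rfl fun s hs => ?_
  have hsq : s ≤ q := by simpa [Nat.lt_succ_iff] using hs
  have hsymm : (p + q + 2).choose (p + s + 2) = (p + q + 2).choose (q - s) :=
    Nat.choose_symm_of_eq_add (by omega)
  have hneg : Ring.choose (-(p + 1 : ℤ)) s = (-1) ^ s * (p + s).choose s := by
    rw [Ring.choose_neg, show (p + 1 : ℤ) + s - 1 = ((p + s : ℕ) : ℤ) by push_cast; ring,
      Ring.choose_natCast]
    simp [Int.negOnePow_def, Units.smul_def]
  rw [hsymm, hneg]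
  norm_cast
  rw [Ring.choose_natCast]
  push_cast
  ring

theorem fLk_one {L k : ℕ} (hk : 1 ≤ k) (hkL : k ≤ L) : fLk L k 1 = k := by
  rcases hkL.eq_or_lt with rfl | hlt
  · rw [fLk_self, mul_one]
  obtain ⟨p, q, rfl, rfl⟩ : ∃ p q, L = p + q + 2 ∧ k = q + 1 :=
    ⟨L - k - 1, k - 1, by omega, by omega⟩
  simp only [fLk_eq_sum_range, one_pow, mul_one]
  exact_mod_cast sum_range_choose_mul_choose_mul_neg_one_pow p q

theorem fLk_zero {L k : ℕ} : fLk L k 0 = 0 :=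
  Finset.sum_eq_zero fun i hi => by
    rw [zero_pow (by have := (Finset.mem_Icc.1 hi).1; omega), mul_zero]

theorem contDiff_fLk {L k : ℕ} {n : WithTop ℕ∞} : ContDiff ℝ n (fLk L k) := by
  unfold fLk
  fun_prop

theorem choose_mul_choose_mul_choose_two {p q s : ℕ} :
    (p + q + 2).choose (p + s + 2) * (p + s).choose s * (p + s + 2).choose 2 =
      (p + q + 2).choose 2 * (p + q).choose p * q.choose s := by
  have h2 := Nat.choose_mul (n := p + q + 2) (k := p + s + 2) (s := 2) (by omega)
  have hp := Nat.choose_mul (n := p + q) (k := p + s) (s := p) (by omega)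
  simp only [Nat.add_sub_cancel, Nat.add_sub_cancel_left] at h2 hp
  rw [Nat.choose_symm_add] at hp
  rw [mul_right_comm, h2, mul_assoc, hp, mul_assoc]

theorem iteratedDeriv_two_fLk (p q : ℕ) (x : ℝ) :
    iteratedDeriv 2 (fLk (p + q + 2) (q + 1)) x =
      2 * (p + q + 2).choose 2 * (p + q).choose p * x ^ p * (1 - x) ^ q := by
  have hbinom : (1 - x) ^ q = ∑ s ∈ Finset.range (q + 1), (-1) ^ s * x ^ s * (q.choose s : ℝ) := by
    rw [sub_eq_neg_add, add_pow]
    simp only [neg_pow x, one_pow, mul_one]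
  rw [funext (fLk_eq_sum_range p q), iteratedDeriv_fun_sum fun s _ => by fun_prop, hbinom,
    Finset.mul_sum]
  refine Finset.sum_congr rfl fun s _ => ?_
  have hchoose : ((p + q + 2).choose (p + s + 2) * (p + s).choose s * (p + s + 2).choose 2 : ℝ) =
      (p + q + 2).choose 2 * (p + q).choose p * q.choose s :=
    mod_cast choose_mul_choose_mul_choose_two
  rw [iteratedDeriv_const_mul_field, iteratedDeriv_pow,
    Nat.descFactorial_eq_factorial_mul_choose, Nat.add_sub_cancel, pow_add]
  push_cast [Nat.factorial_two]
  linear_combination 2 * (-1) ^ s * x ^ p * x ^ s * hchoose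

theorem convexOn_fLk {L k : ℕ} (hk : 1 ≤ k) (hkL : k ≤ L) :
    ConvexOn ℝ (Icc 0 1) (fLk L k) := by
  rcases hkL.eq_or_lt with rfl | hlt
  · rw [funext (fLk_self k)]
    exact ((LinearMap.mul ℝ ℝ k).convexOn (convex_Icc 0 1))
  obtain ⟨p, q, rfl, rfl⟩ : ∃ p q, L = p + q + 2 ∧ k = q + 1 :=
    ⟨L - k - 1, k - 1, by omega, by omega⟩
  refine convexOn_of_deriv2_nonneg' (convex_Icc 0 1)
    (contDiff_fLk.differentiable one_ne_zero).differentiableOn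
    (contDiff_fLk.differentiable_deriv_two).differentiableOn fun x hx => ?_
  rw [← iteratedDeriv_eq_iterate, iteratedDeriv_two_fLk]
  have : 0 ≤ 1 - x := sub_nonneg.2 hx.2
  have := hx.1
  positivity

theorem deriv_fLk_zero (p q : ℕ) : deriv (fLk (p + q + 2) (q + 1)) 0 = 0 := by
  rw [funext (fLk_eq_sum_range p q), deriv_fun_sum fun s _ => by fun_prop]
  exact Finset.sum_eq_zero fun s _ => by simp

theorem monotoneOn_fLk {L k : ℕ} (hk : 1 ≤ k) (hkL : k ≤ L) :
    MonotoneOn (fLk L k) (Icc 0 1) := by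
  have hconvex := convexOn_fLk hk hkL
  rcases hkL.eq_or_lt with rfl | hlt
  · rw [funext (fLk_self k)]
    exact (monotone_mul_left_of_nonneg k.cast_nonneg).monotoneOn _
  obtain ⟨p, q, rfl, rfl⟩ : ∃ p q, L = p + q + 2 ∧ k = q + 1 :=
    ⟨L - k - 1, k - 1, by omega, by omega⟩
  have hdiff : Differentiable ℝ (fLk (p + q + 2) (q + 1)) := contDiff_fLk.differentiable one_ne_zero
  refine monotoneOn_of_deriv_nonneg (convex_Icc 0 1) hdiff.continuous.continuousOn
    hdiff.differentiableOn fun x hx => ?_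
  have hx := interior_subset hx
  rw [← deriv_fLk_zero p q]
  exact hconvex.monotoneOn_deriv (fun y _ => hdiff y) ⟨le_rfl, zero_le_one⟩ hx hx.1

theorem fLk_nonneg {L k : ℕ} (hk : 1 ≤ k) (hkL : k ≤ L) {x : ℝ} (hx : x ∈ Icc (0 : ℝ) 1) :
    0 ≤ fLk L k x := by
  simpa only [fLk_zero] using monotoneOn_fLk hk hkL ⟨le_rfl, zero_le_one⟩ hx hx.1

theorem fLk_le_mul {L k : ℕ} (hk : 1 ≤ k) (hkL : k ≤ L) {x : ℝ} (hx : x ∈ Icc (0 : ℝ) 1) :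
    fLk L k x ≤ k * x := by
  have hchord := (convexOn_fLk hk hkL).2 (x := 0) (y := 1) ⟨le_rfl, zero_le_one⟩
    ⟨zero_le_one, le_rfl⟩ (sub_nonneg.2 hx.2) hx.1 (sub_add_cancel 1 x)
  simpa [fLk_zero, fLk_one hk hkL, mul_comm] using hchord

theorem exists_lipschitzOnWith_fLk (L k : ℕ) :
    ∃ Λ, LipschitzOnWith Λ (fLk L k) (Icc 0 1) :=
  (contDiff_fLk.contDiffOn (n := 1)).exists_lipschitzOnWith one_ne_zero (convex_Icc 0 1)
    isCompact_Icc

/-- Where `φ t = 0` the sign `σ` is that of `φ'`; the identity `σ * φ t = |φ t|` is what allows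
`σ` to be transferred to other differences of the same sign. -/
theorem exists_hasDerivWithinAt_abs_Ioi {φ : ℝ → ℝ} {φ' t : ℝ}
    (h : HasDerivWithinAt φ φ' (Ioi t) t) :
    ∃ σ : ℝ, |σ| ≤ 1 ∧ σ * φ t = |φ t| ∧
      HasDerivWithinAt (fun s => |φ s|) (σ * φ') (Ioi t) t := by
  rcases lt_trichotomy (φ t) 0 with hneg | hzero | hpos
  · exact ⟨-1, by simp, by rw [abs_of_neg hneg, neg_one_mul],
      (hasDerivAt_abs_neg hneg).comp_hasDerivWithinAt t h⟩
  · refine ⟨SignType.sign φ', ?_, by simp [hzero], ?_⟩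
    · rcases SignType.sign φ' with _ | _ | _ <;> simp
    · rw [sign_mul_self]
      rw [hasDerivWithinAt_iff_tendsto_slope' self_notMem_Ioi] at h ⊢
      refine h.abs.congr' ?_
      filter_upwards [self_mem_nhdsWithin] with s hs
      have hst : 0 < s - t := sub_pos.2 hs
      simp [slope_def_field, hzero, abs_div, abs_of_pos hst]
  · exact ⟨1, by simp, by rw [abs_of_pos hpos, one_mul],
      (hasDerivAt_abs_pos hpos).comp_hasDerivWithinAt t h⟩

theorem mul_sub_eq_abs_of_monotoneOn {R : Type*} [Ring R] [LinearOrder R] [IsStrictOrderedRing R]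
    {f : R → R} {s : Set R} (hf : MonotoneOn f s) {x y σ : R} (hx : x ∈ s) (hy : y ∈ s)
    (hσ : σ * (x - y) = |x - y|) :
    σ * (f x - f y) = |f x - f y| := by
  rcases lt_trichotomy x y with hlt | rfl | hgt
  · have hσ1 : σ = -1 := by
      rw [abs_of_neg (sub_neg.2 hlt)] at hσ
      exact mul_right_cancel₀ (sub_neg.2 hlt).ne (by rw [hσ, neg_one_mul])
    rw [hσ1, abs_of_nonpos (sub_nonpos.2 (hf hx hy hlt.le)), neg_one_mul]
  · simp
  · have hσ1 : σ = 1 := by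
      rw [abs_of_pos (sub_pos.2 hgt)] at hσ
      exact mul_right_cancel₀ (sub_pos.2 hgt).ne' (by rw [hσ, one_mul])
    rw [hσ1, abs_of_nonneg (sub_nonneg.2 (hf hy hx hgt.le)), one_mul]

theorem InUbar.mem_Icc {u : ℕ → ℝ} (hu : InUbar u) (j : ℕ) : u j ∈ Icc (0 : ℝ) 1 :=
  ⟨hu.2.2 j, hu.1 ▸ antitone_nat_of_succ_le hu.2.1 j.zero_le⟩

namespace IsMFSol

variable {L k : ℕ} {lam : ℝ} {g h : ℕ → ℝ} {u v : ℝ → ℕ → ℝ}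

theorem continuousOn (hu : IsMFSol L k lam g u) (j : ℕ) :
    ContinuousOn (fun t => u t j) (Ici 0) := by
  rcases j with _ | j
  · exact continuousOn_const.congr fun t ht => (hu.2.1 t ht).1
  · exact fun t ht => (hu.2.2 (j + 1) j.succ_pos t ht).continuousWithinAt

theorem continuousOn_abs_sub (hu : IsMFSol L k lam g u) (hv : IsMFSol L k lam h v) (j : ℕ) :
    ContinuousOn (fun t => |u t j - v t j|) (Ici 0) :=
  ((hu.continuousOn j).sub (hv.continuousOn j)).abs

theorem intervalIntegrable_abs_sub (hu : IsMFSol L k lam g u) (hv : IsMFSol L k lam h v) (j : ℕ)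
    {T : ℝ} (hT : 0 ≤ T) : IntervalIntegrable (fun t => |u t j - v t j|) volume 0 T :=
  ((continuousOn_abs_sub hu hv j).mono Icc_subset_Ici_self).intervalIntegrable_of_Icc hT

theorem intervalIntegrable_abs_fLk_sub (hu : IsMFSol L k lam g u) (hv : IsMFSol L k lam h v)
    (j : ℕ) {T : ℝ} (hT : 0 ≤ T) :
    IntervalIntegrable (fun t => |fLk L k (u t j) - fLk L k (v t j)|) volume 0 T := by
  have hf : Continuous (fLk L k) := (contDiff_fLk (n := 0)).continuous
  exact (((hf.comp_continuousOn (hu.continuousOn j)).sub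
    (hf.comp_continuousOn (hv.continuousOn j))).abs.mono
      Icc_subset_Ici_self).intervalIntegrable_of_Icc hT

theorem abs_sub_le_one (hu : IsMFSol L k lam g u) (hv : IsMFSol L k lam h v) (j : ℕ)
    {t : ℝ} (ht : 0 ≤ t) : |u t j - v t j| ≤ 1 := by
  have hu01 := (hu.2.1 t ht).mem_Icc j
  have hv01 := (hv.2.1 t ht).mem_Icc j
  exact abs_sub_le_of_nonneg_of_le hu01.1 hu01.2 hv01.1 hv01.2

theorem exists_hasDerivWithinAt_abs_sub_le (hk : 1 ≤ k) (hkL : k ≤ L) (hlam : 0 ≤ lam)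
    (hu : IsMFSol L k lam g u) (hv : IsMFSol L k lam h v) (j : ℕ) {t : ℝ} (ht : 0 ≤ t) :
    ∃ D, HasDerivWithinAt (fun s => |u s (j + 1) - v s (j + 1)|) D (Ioi t) t ∧
      D ≤ lam * (|fLk L k (u t j) - fLk L k (v t j)| -
          |fLk L k (u t (j + 1)) - fLk L k (v t (j + 1))|) -
        k * (|u t (j + 1) - v t (j + 1)| - |u t (j + 2) - v t (j + 2)|) := by
  have hsub : Ioi t ⊆ Ici 0 := Ioi_subset_Ici_iff.2 ht
  obtain ⟨σ, hσ, hσd, hderiv⟩ := exists_hasDerivWithinAt_abs_Ioi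
    (((hu.2.2 (j + 1) j.succ_pos t ht).mono hsub).fun_sub
      ((hv.2.2 (j + 1) j.succ_pos t ht).mono hsub))
  refine ⟨_, hderiv, ?_⟩
  have hσf := mul_sub_eq_abs_of_monotoneOn (monotoneOn_fLk hk hkL) ((hu.2.1 t ht).mem_Icc (j + 1))
    ((hv.2.1 t ht).mem_Icc (j + 1)) hσd
  have hσle (x : ℝ) : σ * x ≤ |x| :=
    (le_abs_self _).trans (by rw [abs_mul]; exact mul_le_of_le_one_left (abs_nonneg x) hσ)
  have hprev := mul_le_mul_of_nonneg_left (hσle (fLk L k (u t j) - fLk L k (v t j))) hlam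
  have hnext := mul_le_mul_of_nonneg_left (hσle (u t (j + 2) - v t (j + 2))) k.cast_nonneg
  rw [Nat.add_sub_cancel]
  linear_combination hprev + hnext - lam * hσf - k * hσd

theorem exists_hasDerivWithinAt_sum_abs_sub_le (hk : 1 ≤ k) (hkL : k ≤ L) (hlam : 0 ≤ lam)
    (hu : IsMFSol L k lam g u) (hv : IsMFSol L k lam h v) (j n : ℕ) {t : ℝ} (ht : 0 ≤ t) :
    ∃ D, HasDerivWithinAt
        (fun s => ∑ i ∈ Finset.range n, |u s (j + i + 1) - v s (j + i + 1)|) D (Ioi t) t ∧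
      D ≤ lam * (|fLk L k (u t j) - fLk L k (v t j)| -
          |fLk L k (u t (j + n)) - fLk L k (v t (j + n))|) -
        k * (|u t (j + 1) - v t (j + 1)| - |u t (j + n + 1) - v t (j + n + 1)|) := by
  choose D hD hDle using fun i =>
    exists_hasDerivWithinAt_abs_sub_le hk hkL hlam hu hv (j + i) ht
  refine ⟨_, HasDerivWithinAt.fun_sum fun i _ => hD i,
    (Finset.sum_le_sum fun i _ => hDle i).trans_eq ?_⟩
  rw [Finset.sum_sub_distrib, ← Finset.mul_sum, ← Finset.mul_sum]
  have ha := Finset.sum_range_sub' (fun i => |fLk L k (u t (j + i)) - fLk L k (v t (j + i))|) n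
  have hb := Finset.sum_range_sub' (fun i => |u t (j + i + 1) - v t (j + i + 1)|) n
  simp only [← add_assoc, add_zero] at ha hb
  rw [ha, hb]

theorem sum_abs_sub_add_integral_le (hk : 1 ≤ k) (hkL : k ≤ L) (hlam : 0 ≤ lam)
    (hu : IsMFSol L k lam g u) (hv : IsMFSol L k lam h v) (j n : ℕ) {T : ℝ} (hT : 0 ≤ T) :
    ∑ i ∈ Finset.range n, |u T (j + i + 1) - v T (j + i + 1)| +
        k * ∫ t in (0 : ℝ)..T, |u t (j + 1) - v t (j + 1)| ≤
      ∑ i ∈ Finset.range n, |g (j + i + 1) - h (j + i + 1)| +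
        lam * (∫ t in (0 : ℝ)..T, |fLk L k (u t j) - fLk L k (v t j)|) +
        k * ∫ t in (0 : ℝ)..T, |u t (j + n + 1) - v t (j + n + 1)| := by
  have ha := (intervalIntegrable_abs_fLk_sub hu hv j hT).const_mul lam
  have hb := (intervalIntegrable_abs_sub hu hv (j + 1) hT).const_mul (k : ℝ)
  have hc := (intervalIntegrable_abs_sub hu hv (j + n + 1) hT).const_mul (k : ℝ)
  choose! D hD hDle using fun t (ht : 0 ≤ t) =>
    exists_hasDerivWithinAt_sum_abs_sub_le hk hkL hlam hu hv j n ht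
  have hgrowth := intervalIntegral.sub_le_integral_of_hasDeriv_right_of_le hT
    (continuousOn_finsetSum _ fun i _ =>
      (continuousOn_abs_sub hu hv (j + i + 1)).mono Icc_subset_Ici_self)
    (fun t ht => hD t ht.1.le)
    ((intervalIntegrable_iff_integrableOn_Icc_of_le hT).1 ((ha.sub hb).add hc))
    fun t ht => (hDle t ht.1.le).trans <| by
      have := mul_nonneg hlam (abs_nonneg (fLk L k (u t (j + n)) - fLk L k (v t (j + n))))
      linarith
  rw [intervalIntegral.integral_add (ha.sub hb) hc, intervalIntegral.integral_sub ha hb] at hgrowth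
  simp only [intervalIntegral.integral_const_mul, hu.1, hv.1] at hgrowth
  linarith

theorem integral_abs_sub_le (hu : IsMFSol L k lam g u) (hv : IsMFSol L k lam h v) (j : ℕ)
    {T : ℝ} (hT : 0 ≤ T) : ∫ t in (0 : ℝ)..T, |u t j - v t j| ≤ T := by
  have := intervalIntegral.integral_mono_on hT (intervalIntegrable_abs_sub hu hv j hT)
    intervalIntegrable_const fun t ht => abs_sub_le_one hu hv j ht.1
  simpa using this

theorem integral_abs_comp_sub_zero (hu : IsMFSol L k lam g u) (hv : IsMFSol L k lam h v)
    (φ : ℝ → ℝ) {T : ℝ} (hT : 0 ≤ T) :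
    ∫ t in (0 : ℝ)..T, |φ (u t 0) - φ (v t 0)| = 0 := by
  refine (intervalIntegral.integral_congr fun t ht => ?_).trans intervalIntegral.integral_zero
  have ht0 : 0 ≤ t := (uIcc_of_le hT ▸ ht).1
  simp [(hu.2.1 t ht0).1, (hv.2.1 t ht0).1]

theorem summable_abs_sub (hk : 1 ≤ k) (hkL : k ≤ L) (hlam : 0 ≤ lam)
    (hu : IsMFSol L k lam g u) (hv : IsMFSol L k lam h v)
    (hgh : Summable fun i => |g i - h i|) {T : ℝ} (hT : 0 ≤ T) :
    Summable fun i => |u T i - v T i| := by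
  rw [← summable_nat_add_iff 1] at hgh ⊢
  refine summable_of_sum_range_le (c := ∑' i, |g (i + 1) - h (i + 1)| + k * T)
    (fun _ => abs_nonneg _) fun n => ?_
  have hbalance := sum_abs_sub_add_integral_le hk hkL hlam hu hv 0 n hT
  have hsource := integral_abs_comp_sub_zero hu hv (fLk L k) hT
  have hsum := hgh.sum_le_tsum (Finset.range n) fun i _ => abs_nonneg _
  have hloss : 0 ≤ k * ∫ t in (0 : ℝ)..T, |u t (0 + 1) - v t (0 + 1)| :=
    mul_nonneg k.cast_nonneg (intervalIntegral.integral_nonneg hT fun _ _ => abs_nonneg _)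
  have htail := mul_le_mul_of_nonneg_left (integral_abs_sub_le hu hv (0 + n + 1) hT)
    (k.cast_nonneg (α := ℝ))
  simp only [hsource, zero_add] at hbalance hloss htail
  linarith

theorem tendsto_integral_abs_sub (hk : 1 ≤ k) (hkL : k ≤ L) (hlam : 0 ≤ lam)
    (hu : IsMFSol L k lam g u) (hv : IsMFSol L k lam h v)
    (hgh : Summable fun i => |g i - h i|) {T : ℝ} (hT : 0 ≤ T) :
    Filter.Tendsto (fun n => ∫ t in (0 : ℝ)..T, |u t n - v t n|) Filter.atTop (nhds 0) := by
  have hpos {t : ℝ} (ht : t ∈ uIoc 0 T) : 0 ≤ t := (uIoc_of_le hT ▸ ht).1.le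
  have := intervalIntegral.tendsto_integral_filter_of_dominated_convergence (a := 0) (b := T)
    (μ := volume) (l := Filter.atTop) (F := fun n t => |u t n - v t n|) (f := fun _ => 0)
    (fun _ => 1)
    (.of_forall fun n => (intervalIntegrable_abs_sub hu hv n hT).def'.aestronglyMeasurable)
    (.of_forall fun n => .of_forall fun t ht => by
      simpa using abs_sub_le_one hu hv n (hpos ht))
    intervalIntegrable_const
    (.of_forall fun t ht =>
      (summable_abs_sub hk hkL hlam hu hv hgh (hpos ht)).tendsto_atTop_zero)
  simpa using this

theorem mul_integral_abs_sub_succ_le (hk : 1 ≤ k) (hkL : k ≤ L) (hlam : 0 ≤ lam)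
    (hu : IsMFSol L k lam g u) (hv : IsMFSol L k lam h v)
    (hgh : Summable fun i => |g i - h i|) (j : ℕ) {T : ℝ} (hT : 0 ≤ T) :
    k * ∫ t in (0 : ℝ)..T, |u t (j + 1) - v t (j + 1)| ≤
      ∑' i, |g i - h i| +
        lam * ∫ t in (0 : ℝ)..T, |fLk L k (u t j) - fLk L k (v t j)| := by
  have htail := (tendsto_integral_abs_sub hk hkL hlam hu hv hgh hT).comp
    (Filter.tendsto_add_atTop_nat (j + 1))
  have hlimit := (htail.const_mul (k : ℝ)).const_add
    (∑' i, |g i - h i| + lam * ∫ t in (0 : ℝ)..T, |fLk L k (u t j) - fLk L k (v t j)|)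
  rw [mul_zero, add_zero] at hlimit
  refine ge_of_tendsto' hlimit fun n => ?_
  have hbalance := sum_abs_sub_add_integral_le hk hkL hlam hu hv j n hT
  have hsum : ∑ i ∈ Finset.range n, |g (j + i + 1) - h (j + i + 1)| ≤ ∑' i, |g i - h i| := by
    have := hgh.sum_le_tsum ((Finset.range n).map (addLeftEmbedding (j + 1)))
      fun i _ => abs_nonneg _
    simpa [add_right_comm] using this
  have hnonneg : 0 ≤ ∑ i ∈ Finset.range n, |u T (j + i + 1) - v T (j + i + 1)| :=
    Finset.sum_nonneg fun _ _ => abs_nonneg _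
  simp only [Function.comp_apply, ← add_assoc, add_comm n j]
  linarith

theorem integral_abs_fLk_sub_le (hu : IsMFSol L k lam g u) (hv : IsMFSol L k lam h v)
    {Λ : NNReal} (hΛ : LipschitzOnWith Λ (fLk L k) (Icc 0 1)) (j : ℕ) {T : ℝ} (hT : 0 ≤ T) :
    ∫ t in (0 : ℝ)..T, |fLk L k (u t j) - fLk L k (v t j)| ≤
      Λ * ∫ t in (0 : ℝ)..T, |u t j - v t j| := by
  rw [← intervalIntegral.integral_const_mul]
  exact intervalIntegral.integral_mono_on hT (intervalIntegrable_abs_fLk_sub hu hv j hT)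
    ((intervalIntegrable_abs_sub hu hv j hT).const_mul _) fun t ht =>
      hΛ.dist_le_mul _ ((hu.2.1 t ht.1).mem_Icc j) _ ((hv.2.1 t ht.1).mem_Icc j)

theorem exists_integral_abs_sub_le (hk : 1 ≤ k) (hkL : k ≤ L) (hlam : 0 ≤ lam)
    (hu : IsMFSol L k lam g u) (hv : IsMFSol L k lam h v)
    (hgh : Summable fun i => |g i - h i|) (j : ℕ) :
    ∃ C, ∀ T, 0 ≤ T → ∫ t in (0 : ℝ)..T, |u t j - v t j| ≤ C := by
  obtain ⟨Λ, hΛ⟩ := exists_lipschitzOnWith_fLk L k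
  induction j with
  | zero => exact ⟨0, fun T hT => (integral_abs_comp_sub_zero hu hv id hT).le⟩
  | succ j ih =>
    obtain ⟨C, hC⟩ := ih
    refine ⟨(∑' i, |g i - h i| + lam * (Λ * C)) / k, fun T hT => ?_⟩
    rw [le_div_iff₀' (Nat.cast_pos.2 hk)]
    refine (mul_integral_abs_sub_succ_le hk hkL hlam hu hv hgh j hT).trans ?_
    have hlip := integral_abs_fLk_sub_le hu hv hΛ j hT
    have hCT := hC T hT
    gcongr
    exact hlip.trans (by gcongr)

end IsMFSol

theorem mfSol_integral_bound_general {L k : ℕ} (hk : 1 ≤ k) (hkL : k ≤ L) {lam : ℝ}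
    (hlam : 0 ≤ lam) {g h : ℕ → ℝ} (hgh : Summable fun i => |g i - h i|) {u v : ℝ → ℕ → ℝ}
    (hu : IsMFSol L k lam g u) (hv : IsMFSol L k lam h v) (j : ℕ) :
    IntegrableOn (fun t => |u t j - v t j|) (Ioi 0) := by
  obtain ⟨C, hC⟩ := hu.exists_integral_abs_sub_le hk hkL hlam hv hgh j
  refine integrableOn_Ioi_of_intervalIntegral_norm_bounded (ι := ℝ) (l := Filter.atTop)
    (b := id) C 0 (fun T => ?_) Filter.tendsto_id ?_
  · exact ((hu.continuousOn_abs_sub hv j).mono Icc_subset_Ici_self).integrableOn_Icc.mono_set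
      Ioc_subset_Icc_self
  · filter_upwards [Filter.eventually_ge_atTop 0] with T hT
    simpa only [Real.norm_eq_abs, abs_abs, id] using hC T hT

section FixedPoint

variable {L k : ℕ} {lam : ℝ} {ubar : ℕ → ℝ}

theorem div_mul_fLk_mem_Icc (hk : 1 ≤ k) (hkL : k ≤ L) (hlam : 0 ≤ lam) {x : ℝ}
    (hx : x ∈ Icc (0 : ℝ) 1) : lam / k * fLk L k x ∈ Icc 0 (lam * x) := by
  refine ⟨mul_nonneg (by positivity) (fLk_nonneg hk hkL hx), ?_⟩
  rw [div_mul_eq_mul_div, div_le_iff₀ (Nat.cast_pos.2 hk), mul_assoc, mul_comm x]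
  exact mul_le_mul_of_nonneg_left (fLk_le_mul hk hkL hx) hlam

theorem fixedPoint_mem_Icc (hk : 1 ≤ k) (hkL : k ≤ L) (hlam0 : 0 ≤ lam) (hlam1 : lam ≤ 1)
    (h0 : ubar 0 = 1) (hrec : ∀ m, ubar (m + 1) = lam / k * fLk L k (ubar m)) (m : ℕ) :
    ubar m ∈ Icc 0 (lam ^ m) := by
  induction m with
  | zero => simp [h0]
  | succ m ih =>
    have hstep := div_mul_fLk_mem_Icc hk hkL hlam0
      ⟨ih.1, ih.2.trans (pow_le_one₀ hlam0 hlam1)⟩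
    rw [hrec, pow_succ']
    exact ⟨hstep.1, hstep.2.trans (mul_le_mul_of_nonneg_left ih.2 hlam0)⟩

theorem inUbar_fixedPoint (hk : 1 ≤ k) (hkL : k ≤ L) (hlam0 : 0 ≤ lam) (hlam1 : lam ≤ 1)
    (h0 : ubar 0 = 1) (hrec : ∀ m, ubar (m + 1) = lam / k * fLk L k (ubar m)) :
    InUbar ubar := by
  have hmem := fixedPoint_mem_Icc hk hkL hlam0 hlam1 h0 hrec
  refine ⟨h0, fun m => ?_, fun m => (hmem m).1⟩
  rw [hrec]
  exact (div_mul_fLk_mem_Icc hk hkL hlam0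
    ⟨(hmem m).1, (hmem m).2.trans (pow_le_one₀ hlam0 hlam1)⟩).2.trans
      (mul_le_of_le_one_left (hmem m).1 hlam1)

theorem summable_fixedPoint (hk : 1 ≤ k) (hkL : k ≤ L) (hlam0 : 0 ≤ lam) (hlam1 : lam < 1)
    (h0 : ubar 0 = 1) (hrec : ∀ m, ubar (m + 1) = lam / k * fLk L k (ubar m)) :
    Summable ubar :=
  have hmem := fixedPoint_mem_Icc hk hkL hlam0 hlam1.le h0 hrec
  (summable_geometric_of_lt_one hlam0 hlam1).of_nonneg_of_le (fun m => (hmem m).1)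
    fun m => (hmem m).2

theorem isMFSol_fixedPoint (hk : 1 ≤ k) (hkL : k ≤ L) (hlam0 : 0 ≤ lam) (hlam1 : lam ≤ 1)
    (h0 : ubar 0 = 1) (hrec : ∀ m, ubar (m + 1) = lam / k * fLk L k (ubar m)) :
    IsMFSol L k lam ubar fun _ => ubar := by
  refine ⟨fun _ => rfl, fun _ _ => inUbar_fixedPoint hk hkL hlam0 hlam1 h0 hrec,
    fun j hj t _ => ?_⟩
  obtain ⟨j, rfl⟩ := Nat.exists_eq_add_of_le' hj
  have hbalance (m : ℕ) : lam * fLk L k (ubar m) = k * ubar (m + 1) := by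
    rw [hrec, ← mul_assoc, mul_div_cancel₀ lam (Nat.cast_ne_zero.2 (by omega))]
  rw [Nat.add_sub_cancel, mul_sub, mul_sub, hbalance, hbalance, sub_self]
  exact hasDerivWithinAt_const ..

end FixedPoint

/-- estimate \eqref{eqn:momIntBound}: for `0 < λ < 1` and a `Ū`-valued
solution `u` with initial condition `g ∈ U` dominated by, or dominating, the fixed point
`ū` coordinatewise, one has `∫_0^∞ |u_j(t) − ū_j| dt < ∞` for every `j`. -/
theorem mfSol_integral_bound (L k : ℕ) (hk : 1 ≤ k) (hkL : k ≤ L)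
    (lam : ℝ) (hlam0 : 0 < lam) (hlam1 : lam < 1)
    (ubar : ℕ → ℝ) (h0 : ubar 0 = 1)
    (hrec : ∀ m : ℕ, ubar (m + 1) = lam / k * fLk L k (ubar m))
    (g : ℕ → ℝ) (hg : InUbar g) (hgU : Summable (fun i : ℕ => g (i + 1)))
    (hcase : (∀ j, g j ≤ ubar j) ∨ (∀ j, ubar j ≤ g j))
    (u : ℝ → ℕ → ℝ) (hu : IsMFSol L k lam g u) :
    ∀ j : ℕ, IntegrableOn (fun t : ℝ => |u t j - ubar j|) (Set.Ioi (0 : ℝ)) := by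
  exact mfSol_integral_bound_general hk hkL hlam0.le
    (((summable_nat_add_iff 1).1 hgU).sub (summable_fixedPoint hk hkL hlam0.le hlam1 h0 hrec)).abs
    hu (isMFSol_fixedPoint hk hkL hlam0.le hlam1.le h0 hrec)
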